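/- Let r > 0, let v ∈ X_r, let n ≥ 1 be an integer, and define, for h ∈ X_r, F_n(h) = (v + (1/p⁰)Q⁺(h,h)) / (√n + (1/p⁰)Q⁻(𝟙,h)), where Q⁻(𝟙,h)(p̄) = αβ² ∫_{ℝ³} (1/q⁰) ∫_{S²} h(q̄) S₀(p̄,q̄,p̄′,q̄′) dω dq̄. Then for all h, g ∈ X_r: (i) ‖F_n(h)‖ ≤ r(1+Cr)/√n, and (ii) ‖F_n(h) − F_n(g)‖ ≤ (3Cr(1+Cr)/√n)·‖h − g‖. In particular, if (1+Cr)/√n ≤ 1 and 3Cr(1+Cr)/√n ≤ 1/2, then F_n is a contracting self-map of X_r. -/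

import Mathlib

/-!
The two estimates rest on the bilinear bound `‖(1/p⁰) Q⁺(f,g)‖ ≤ C ‖f‖ ‖g‖` in `L¹` and on the
pointwise bound `|(1/p⁰) Q⁻(𝟙,f)| ≤ C ‖f‖`, with `C = 4πC₁αβ²`.

For the gain term, fix the direction `ω`, with metric normalization `w`. The collision map
`T(p̄,q̄) = (p̄ + cw, q̄ - cw)` is an involution (`collT_collT`), and its derivative is a rank-one
perturbation of the identity. Hence its determinant is `1 + ∂c`, where `∂c` is the derivative of `c`
in the direction `(w,-w)`. That derivative depends only on `p⁰, q⁰, w·p̄, w·q̄`, and a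
one-dimensional computation (`scalar_deriv`) gives Glassey's Jacobian
`|det DT| = p′⁰q′⁰/(p⁰q⁰)` (`abs_det_collT`). Changing variables therefore turns
`∬ f(p̄′) g(q̄′) dp̄ dq̄/(p⁰q⁰)` into `∬ f g dp̄ dq̄/(p⁰q⁰) ≤ ‖f‖ ‖g‖` (`lintegral_collT_le`), and
integrating over the sphere, of area `4π`, gives `integral_abs_gain_le`. The same bound makes the
gain integrals absolutely convergent for almost every `p̄`, which justifies the polarization
`Q⁺(h,h) - Q⁺(g,g) = Q⁺(h-g,h) + Q⁺(g,h-g)` (`gain_sub_ae`).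

Write `F_n(h) = N_h / (√n + L_h)` with `L_h ≥ 0` and `√n ≥ 1`. Then `|F_n(h)| ≤ |N_h|/√n`, and
`|F_n(h) - F_n(g)| ≤ (|N_h - N_g| + |N_g| |L_h - L_g|)/√n`. Integrating, the first term contributes
at most `2Cr‖h-g‖/√n` and the second at most `r(1+Cr)C‖h-g‖/√n`; their sum is
`Cr(3+Cr)‖h-g‖/√n ≤ 3Cr(1+Cr)‖h-g‖/√n`.
-/

open MeasureTheory Real

noncomputable section

/-- Momentum space `ℝ³`. -/
abbrev E3 : Type := EuclideanSpace ℝ (Fin 3)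

/-- The scalar product associated with the Bianchi type I metric coefficients `α = a(t)`,
`β = b(t)`: `p̄·q̄ = α²p¹q¹ + β²(p²q² + p³q³)`. -/
def mdot (α β : ℝ) (p q : E3) : ℝ :=
  α ^ 2 * p 0 * q 0 + β ^ 2 * (p 1 * q 1 + p 2 * q 2)

/-- `p⁰ = √(1 + |p̄|²)` where `|p̄|² = p̄·p̄`. -/
def pZ (α β : ℝ) (p : E3) : ℝ := Real.sqrt (1 + mdot α β p p)

/-- `ω` normalized to unit length for the metric norm. -/
def omHat (α β : ℝ) (ω : E3) : E3 := (Real.sqrt (mdot α β ω ω))⁻¹ • ω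

/-- The total energy `e = p⁰ + q⁰`. -/
def collE (α β : ℝ) (p q : E3) : ℝ := pZ α β p + pZ α β q

/-- The function `C(p̄, q̄, ω)` of Glassey's representation of post-collisional momenta. -/
def collC (α β : ℝ) (p q ω : E3) : ℝ :=
  2 * pZ α β p * pZ α β q * collE α β p q *
      mdot α β (omHat α β ω) ((pZ α β q)⁻¹ • q - (pZ α β p)⁻¹ • p) /
    (collE α β p q ^ 2 - mdot α β (omHat α β ω) (p + q) ^ 2)

/-- The post-collisional momentum `p̄′ = p̄ + C(p̄,q̄,ω)ω̂`. -/
def pPr (α β : ℝ) (p q ω : E3) : E3 := p + collC α β p q ω • omHat α β ω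

/-- The post-collisional momentum `q̄′ = q̄ − C(p̄,q̄,ω)ω̂`. -/
def qPr (α β : ℝ) (p q ω : E3) : E3 := q - collC α β p q ω • omHat α β ω

/-- The surface measure on the unit sphere `S² ⊂ ℝ³`. -/
def sphMeas : Measure (Metric.sphere (0 : E3) 1) := (volume : Measure E3).toSphere

/-- The gain term `Q⁺(f,g)`. -/
def Qplus (α β : ℝ) (S₀ : E3 → E3 → E3 → E3 → ℝ) (f g : E3 → ℝ) (p : E3) : ℝ :=
  α * β ^ 2 *
    ∫ q : E3, (pZ α β q)⁻¹ *
      ∫ ω : Metric.sphere (0 : E3) 1,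
        f (pPr α β p q ω) * g (qPr α β p q ω) *
          S₀ p q (pPr α β p q ω) (qPr α β p q ω) ∂sphMeas

/-- The loss term `Q⁻(f,g)`. -/
def Qminus (α β : ℝ) (S₀ : E3 → E3 → E3 → E3 → ℝ) (f g : E3 → ℝ) (p : E3) : ℝ :=
  α * β ^ 2 *
    ∫ q : E3, (pZ α β q)⁻¹ *
      ∫ ω : Metric.sphere (0 : E3) 1,
        f p * g q * S₀ p q (pPr α β p q ω) (qPr α β p q ω) ∂sphMeas

/-- The collision operator `Q = Q⁺ − Q⁻`. -/
def Qcoll (α β : ℝ) (S₀ : E3 → E3 → E3 → E3 → ℝ) (f g : E3 → ℝ) (p : E3) : ℝ :=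
  Qplus α β S₀ f g p - Qminus α β S₀ f g p

/-- The space `L¹(ℝ³)`. -/
abbrev L1 : Type := Lp ℝ 1 (volume : Measure E3)

/-- Membership in `X_r = {f ∈ L¹(ℝ³) : f ≥ 0 a.e., ‖f‖ ≤ r}`. -/
def memX (r : ℝ) (f : L1) : Prop := (0 ≤ᵐ[volume] ⇑f) ∧ ‖f‖ ≤ r

end

noncomputable section

/-- The map `F_n(h) = (v + (1/p⁰)Q⁺(h,h)) / (√n + (1/p⁰)Q⁻(𝟙,h))`. -/
def Fmap (α β : ℝ) (S₀ : E3 → E3 → E3 → E3 → ℝ) (n : ℕ) (v h : E3 → ℝ) (p : E3) : ℝ :=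
  (v p + (pZ α β p)⁻¹ * Qplus α β S₀ h h p) /
    (Real.sqrt n + (pZ α β p)⁻¹ * Qminus α β S₀ (fun _ => 1) h p)

end


/-! ### Collision geometry -/

section Scalar

variable {P Q x y : ℝ}

/-- Here and below `P`, `Q` stand for the energies `p⁰`, `q⁰` and `x`, `y` for the components
`w·p̄`, `w·q̄` along a unit direction `w`; the statement is that the denominator of the collision
shift is positive. -/
theorem scalar_D_pos (hP : 0 < P) (hQ : 0 < Q) (hx : x ^ 2 < P ^ 2) (hy : y ^ 2 < Q ^ 2) :
    0 < (P + Q) ^ 2 - (x + y) ^ 2 := by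
  have h1 := abs_lt.1 (abs_lt_of_sq_lt_sq hx hP.le)
  have h2 := abs_lt.1 (abs_lt_of_sq_lt_sq hy hQ.le)
  nlinarith

/-- Positivity of the energy of the first particle after the collision. -/
theorem scalar_energy_pos (hP : 0 < P) (hQ : 0 < Q) (hx : x ^ 2 < P ^ 2) (hy : y ^ 2 < Q ^ 2) :
    0 < P + 2 * (x + y) * (P * y - Q * x) / ((P + Q) ^ 2 - (x + y) ^ 2) := by
  have hD := scalar_D_pos hP hQ hx hy
  have h1 := abs_lt.1 (abs_lt_of_sq_lt_sq hx hP.le)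
  have h2 := abs_lt.1 (abs_lt_of_sq_lt_sq hy hQ.le)
  have key : 0 < P * ((P + Q) ^ 2 - (x + y) ^ 2) + 2 * (x + y) * (P * y - Q * x) := by
    have e : P * ((P + Q) ^ 2 - (x + y) ^ 2) + 2 * (x + y) * (P * y - Q * x)
        = (P + x) / 2 * ((P + Q) - (x + y)) ^ 2 + (P - x) / 2 * ((P + Q) + (x + y)) ^ 2 := by
      ring
    rw [e]
    have a1 : 0 < P + x := by linarith
    have a2 : 0 < P - x := by linarith
    have a3 : 0 < (P + Q) - (x + y) := by linarith
    have a4 : 0 < (P + Q) + (x + y) := by linarith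
    positivity
  have : P + 2 * (x + y) * (P * y - Q * x) / ((P + Q) ^ 2 - (x + y) ^ 2)
      = (P * ((P + Q) ^ 2 - (x + y) ^ 2) + 2 * (x + y) * (P * y - Q * x)) /
        ((P + Q) ^ 2 - (x + y) ^ 2) := by
    field_simp
  rw [this]
  positivity

/-- Conservation of energy: with `c` the collision shift, the first particle leaves with squared
energy `P² + 2cx + c²`, and this is the square of an explicit rational expression. -/
theorem scalar_energy_sq (hD : (P + Q) ^ 2 - (x + y) ^ 2 ≠ 0) :
    P ^ 2 + 2 * (2 * (P + Q) * (P * y - Q * x) / ((P + Q) ^ 2 - (x + y) ^ 2)) * x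
      + (2 * (P + Q) * (P * y - Q * x) / ((P + Q) ^ 2 - (x + y) ^ 2)) ^ 2 =
    (P + 2 * (x + y) * (P * y - Q * x) / ((P + Q) ^ 2 - (x + y) ^ 2)) ^ 2 := by
  field_simp
  ring

/-- The derivative of the collision shift `c` when `(p̄, q̄)` moves along `(p̄ + tw, q̄ - tw)`:
one plus this derivative equals `-p′⁰q′⁰/(p⁰q⁰)`. -/
theorem scalar_deriv (hP : 0 < P) (hQ : 0 < Q) (hx : x ^ 2 < P ^ 2) (hy : y ^ 2 < Q ^ 2) :
    HasDerivAt (fun t : ℝ =>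
      2 * (√(P ^ 2 + 2 * t * x + t ^ 2) + √(Q ^ 2 - 2 * t * y + t ^ 2)) *
        (√(P ^ 2 + 2 * t * x + t ^ 2) * (y - t) - √(Q ^ 2 - 2 * t * y + t ^ 2) * (x + t)) /
      ((√(P ^ 2 + 2 * t * x + t ^ 2) + √(Q ^ 2 - 2 * t * y + t ^ 2)) ^ 2 - (x + y) ^ 2))
      (- ((P + 2 * (x + y) * (P * y - Q * x) / ((P + Q) ^ 2 - (x + y) ^ 2)) *
          (Q - 2 * (x + y) * (P * y - Q * x) / ((P + Q) ^ 2 - (x + y) ^ 2))) / (P * Q) - 1) 0 := by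
  have hD := scalar_D_pos hP hQ hx hy
  have hP0 : √(P ^ 2 + 2 * 0 * x + 0 ^ 2) = P := by
    simp [Real.sqrt_sq hP.le]
  have hQ0 : √(Q ^ 2 - 2 * 0 * y + 0 ^ 2) = Q := by
    simp [Real.sqrt_sq hQ.le]
  have dP : HasDerivAt (fun t : ℝ => √(P ^ 2 + 2 * t * x + t ^ 2)) (x / P) 0 := by
    have h1 : HasDerivAt (fun t : ℝ => P ^ 2 + 2 * t * x + t ^ 2) (2 * x) 0 := by
      have := ((((hasDerivAt_id (0 : ℝ)).const_mul 2).mul_const x).const_add (P ^ 2)).add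
        ((hasDerivAt_id (0 : ℝ)).pow 2)
      exact this.congr_deriv (by simp)
    have h2 := h1.sqrt (by simp [hP.ne'])
    refine h2.congr_deriv ?_
    rw [hP0]; field_simp
  have dQ : HasDerivAt (fun t : ℝ => √(Q ^ 2 - 2 * t * y + t ^ 2)) (-y / Q) 0 := by
    have h1 : HasDerivAt (fun t : ℝ => Q ^ 2 - 2 * t * y + t ^ 2) (-(2 * y)) 0 := by
      have := ((((hasDerivAt_id (0 : ℝ)).const_mul 2).mul_const y).const_sub (Q ^ 2)).add
        ((hasDerivAt_id (0 : ℝ)).pow 2)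
      exact this.congr_deriv (by simp)
    have h2 := h1.sqrt (by simp [hQ.ne'])
    refine h2.congr_deriv ?_
    rw [hQ0]; field_simp
  have dy : HasDerivAt (fun t : ℝ => y - t) (-1) 0 := (hasDerivAt_id (0 : ℝ)).const_sub y
  have dx : HasDerivAt (fun t : ℝ => x + t) 1 0 := (hasDerivAt_id (0 : ℝ)).const_add x
  have := (((dP.add dQ).const_mul 2).mul ((dP.mul dy).sub (dQ.mul dx))).div
    (((dP.add dQ).pow 2).sub_const ((x + y) ^ 2))
    (by
      simp only [Pi.add_apply, Pi.pow_apply]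
      rw [hP0, hQ0]; exact hD.ne')
  refine this.congr_deriv ?_
  simp only [Pi.add_apply, Pi.pow_apply, Pi.mul_apply, Pi.sub_apply]
  rw [hP0, hQ0]
  have hP' := hP.ne'
  have hQ' := hQ.ne'
  have hD' := hD.ne'
  simp only [sub_zero, add_zero]
  field_simp
  ring

end Scalar

section Geometry

variable {α β : ℝ}

theorem mdot_add_right (w p q : E3) : mdot α β w (p + q) = mdot α β w p + mdot α β w q := by
  simp [mdot]; ring

theorem mdot_sub_right (w p q : E3) : mdot α β w (p - q) = mdot α β w p - mdot α β w q := by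
  simp [mdot]; ring

theorem mdot_smul_right (c : ℝ) (w p : E3) : mdot α β w (c • p) = c * mdot α β w p := by
  simp [mdot]; ring

theorem mdot_self_nonneg (p : E3) : 0 ≤ mdot α β p p := by
  have : mdot α β p p = (α * p 0) ^ 2 + (β * p 1) ^ 2 + (β * p 2) ^ 2 := by
    simp only [mdot]; ring
  rw [this]; positivity

theorem pZ_sq (p : E3) : pZ α β p ^ 2 = 1 + mdot α β p p := by
  rw [pZ, Real.sq_sqrt]; linarith [mdot_self_nonneg (α := α) (β := β) p]

theorem one_le_pZ (p : E3) : 1 ≤ pZ α β p := by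
  rw [pZ, Real.one_le_sqrt]; linarith [mdot_self_nonneg (α := α) (β := β) p]

theorem pZ_pos (p : E3) : 0 < pZ α β p := zero_lt_one.trans_le (one_le_pZ p)

theorem mdot_self_pos (hα : 0 < α) (hβ : 0 < β) {p : E3} (hp : p ≠ 0) : 0 < mdot α β p p := by
  have e : mdot α β p p = (α * p 0) ^ 2 + (β * p 1) ^ 2 + (β * p 2) ^ 2 := by
    simp only [mdot]; ring
  refine lt_of_le_of_ne (mdot_self_nonneg p) fun h => hp ?_
  rw [e] at h
  have h0 : (α * p 0) ^ 2 = 0 := by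
    nlinarith [sq_nonneg (α * p 0), sq_nonneg (β * p 1), sq_nonneg (β * p 2)]
  have h1 : (β * p 1) ^ 2 = 0 := by
    nlinarith [sq_nonneg (α * p 0), sq_nonneg (β * p 1), sq_nonneg (β * p 2)]
  have h2 : (β * p 2) ^ 2 = 0 := by
    nlinarith [sq_nonneg (α * p 0), sq_nonneg (β * p 1), sq_nonneg (β * p 2)]
  have k0 : p 0 = 0 := by simpa [hα.ne'] using h0
  have k1 : p 1 = 0 := by simpa [hβ.ne'] using h1
  have k2 : p 2 = 0 := by simpa [hβ.ne'] using h2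
  ext i
  fin_cases i
  exacts [k0, k1, k2]

theorem mdot_omHat (hα : 0 < α) (hβ : 0 < β) {ω : E3} (hω : ω ≠ 0) :
    mdot α β (omHat α β ω) (omHat α β ω) = 1 := by
  have h := mdot_self_pos hα hβ hω
  have e : mdot α β (omHat α β ω) (omHat α β ω)
      = (√(mdot α β ω ω))⁻¹ ^ 2 * mdot α β ω ω := by
    simp [mdot, omHat]; ring
  rw [e, inv_pow, Real.sq_sqrt h.le, inv_mul_cancel₀ h.ne']

theorem mdot_sq_lt {w : E3} (hw : mdot α β w w = 1) (p : E3) :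
    mdot α β w p ^ 2 < pZ α β p ^ 2 := by
  -- Lagrange's identity gives the Cauchy-Schwarz inequality for the metric
  have cs : mdot α β w p ^ 2 ≤ mdot α β w w * mdot α β p p := by
    have : mdot α β w w * mdot α β p p - mdot α β w p ^ 2 =
        (α * β * (w 0 * p 1 - w 1 * p 0)) ^ 2 + (α * β * (w 0 * p 2 - w 2 * p 0)) ^ 2
          + (β ^ 2 * (w 1 * p 2 - w 2 * p 1)) ^ 2 := by
      simp only [mdot]; ring
    nlinarith [sq_nonneg (α * β * (w 0 * p 1 - w 1 * p 0)),
      sq_nonneg (α * β * (w 0 * p 2 - w 2 * p 0)), sq_nonneg (β ^ 2 * (w 1 * p 2 - w 2 * p 1))]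
  rw [hw, one_mul] at cs
  rw [pZ_sq]; linarith

theorem pZ_add_smul {w : E3} (hw : mdot α β w w = 1) (p : E3) (t : ℝ) :
    pZ α β (p + t • w) = √(pZ α β p ^ 2 + 2 * t * mdot α β w p + t ^ 2) := by
  have : 1 + mdot α β (p + t • w) (p + t • w) =
      pZ α β p ^ 2 + 2 * t * mdot α β w p + t ^ 2 * mdot α β w w := by
    rw [pZ_sq]; simp [mdot]; ring
  rw [pZ, this, hw, mul_one]

theorem pZ_sub_smul {w : E3} (hw : mdot α β w w = 1) (p : E3) (t : ℝ) :
    pZ α β (p - t • w) = √(pZ α β p ^ 2 - 2 * t * mdot α β w p + t ^ 2) := by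
  have := pZ_add_smul hw p (-t)
  rw [neg_smul, ← sub_eq_add_neg] at this
  rw [this]; congr 1; ring

/-- The collision shift `c`, with denominators cleared, as a function of the metrically normalized
direction `w` and of the pair `z = (p̄, q̄)`. -/
noncomputable def shift (α β : ℝ) (w : E3) (z : E3 × E3) : ℝ :=
  2 * (pZ α β z.1 + pZ α β z.2) *
      (pZ α β z.1 * mdot α β w z.2 - pZ α β z.2 * mdot α β w z.1) /
    ((pZ α β z.1 + pZ α β z.2) ^ 2 - (mdot α β w z.1 + mdot α β w z.2) ^ 2)

/-- The energy exchanged in the collision: the energies after it are `p⁰ + δ` and `q⁰ - δ`. -/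
noncomputable def eShift (α β : ℝ) (w : E3) (z : E3 × E3) : ℝ :=
  2 * (mdot α β w z.1 + mdot α β w z.2) *
      (pZ α β z.1 * mdot α β w z.2 - pZ α β z.2 * mdot α β w z.1) /
    ((pZ α β z.1 + pZ α β z.2) ^ 2 - (mdot α β w z.1 + mdot α β w z.2) ^ 2)

/-- The collision transformation `(p̄, q̄) ↦ (p̄′, q̄′)` for a fixed direction `w`. -/
noncomputable def collT (α β : ℝ) (w : E3) (z : E3 × E3) : E3 × E3 :=
  z + shift α β w z • (w, -w)

theorem collT_fst (w : E3) (z : E3 × E3) :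
    (collT α β w z).1 = z.1 + shift α β w z • w := rfl

theorem collT_snd (w : E3) (z : E3 × E3) :
    (collT α β w z).2 = z.2 - shift α β w z • w := by
  simp [collT, sub_eq_add_neg]

theorem collC_eq (p q ω : E3) : collC α β p q ω = shift α β (omHat α β ω) (p, q) := by
  have h1 := (pZ_pos (α := α) (β := β) p).ne'
  have h2 := (pZ_pos (α := α) (β := β) q).ne'
  rw [collC, shift, mdot_sub_right, mdot_smul_right, mdot_smul_right, mdot_add_right, collE]
  congr 1
  field_simp

theorem pPr_eq (p q ω : E3) : pPr α β p q ω = (collT α β (omHat α β ω) (p, q)).1 := by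
  rw [pPr, collC_eq, collT_fst]

theorem qPr_eq (p q ω : E3) : qPr α β p q ω = (collT α β (omHat α β ω) (p, q)).2 := by
  rw [qPr, collC_eq, collT_snd]

theorem denom_pos {w : E3} (hw : mdot α β w w = 1) (z : E3 × E3) :
    0 < (pZ α β z.1 + pZ α β z.2) ^ 2 - (mdot α β w z.1 + mdot α β w z.2) ^ 2 :=
  scalar_D_pos (pZ_pos _) (pZ_pos _) (mdot_sq_lt hw _) (mdot_sq_lt hw _)

theorem pZ_collT_fst {w : E3} (hw : mdot α β w w = 1) (z : E3 × E3) :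
    pZ α β (collT α β w z).1 = pZ α β z.1 + eShift α β w z := by
  rw [collT_fst, pZ_add_smul hw, shift, scalar_energy_sq (denom_pos hw z).ne', Real.sqrt_sq, eShift]
  exact (scalar_energy_pos (pZ_pos _) (pZ_pos _) (mdot_sq_lt hw _) (mdot_sq_lt hw _)).le

theorem pZ_collT_snd {w : E3} (hw : mdot α β w w = 1) (z : E3 × E3) :
    pZ α β (collT α β w z).2 = pZ α β z.2 - eShift α β w z := by
  -- the formulas for `q̄′` are those for `p̄′` with the two particles exchanged
  have hs : shift α β w z = - shift α β w z.swap := by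
    simp only [shift, Prod.fst_swap, Prod.snd_swap]
    rw [← neg_div]; congr 1 <;> ring
  have he : eShift α β w z = - eShift α β w z.swap := by
    simp only [eShift, Prod.fst_swap, Prod.snd_swap]
    rw [← neg_div]; congr 1 <;> ring
  have := pZ_collT_fst hw z.swap
  rw [collT_snd, hs, he, neg_smul, sub_neg_eq_add, sub_neg_eq_add]
  simpa [collT_fst] using this

/-- A collision in direction `w` is undone by a second one in the same direction. -/
theorem collT_collT {w : E3} (hw : mdot α β w w = 1) (z : E3 × E3) :
    collT α β w (collT α β w z) = z := by
  have hD := (denom_pos hw z).ne'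
  have hs : shift α β w (collT α β w z) = - shift α β w z := by
    rw [shift, pZ_collT_fst hw, pZ_collT_snd hw, collT_fst, collT_snd, mdot_add_right,
      mdot_sub_right, mdot_smul_right, hw]
    -- the relative quantity `p⁰ (w·q̄) - q⁰ (w·p̄)` changes sign
    have hN : (pZ α β z.1 + eShift α β w z) * (mdot α β w z.2 - shift α β w z * 1) -
        (pZ α β z.2 - eShift α β w z) * (mdot α β w z.1 + shift α β w z * 1) =
        -(pZ α β z.1 * mdot α β w z.2 - pZ α β z.2 * mdot α β w z.1) := by
      simp only [shift, eShift]
      field_simp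
      ring
    rw [hN]
    conv_rhs => rw [shift]
    rw [← neg_div]
    congr 1 <;> ring
  conv_lhs => rw [collT, hs]
  rw [collT, neg_smul, add_neg_cancel_right]

theorem contDiff_mdot_right (w : E3) : ContDiff ℝ 1 (fun p : E3 => mdot α β w p) := by
  unfold mdot; fun_prop

theorem contDiff_pZ : ContDiff ℝ 1 (fun p : E3 => pZ α β p) := by
  unfold pZ
  refine ContDiff.sqrt ?_ fun p => ?_
  · unfold mdot; fun_prop
  · linarith [mdot_self_nonneg (α := α) (β := β) p]

theorem contDiff_shift {w : E3} (hw : mdot α β w w = 1) : ContDiff ℝ 1 (shift α β w) := by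
  unfold shift
  have a1 : ContDiff ℝ 1 (fun z : E3 × E3 => pZ α β z.1) := contDiff_pZ.comp contDiff_fst
  have a2 : ContDiff ℝ 1 (fun z : E3 × E3 => pZ α β z.2) := contDiff_pZ.comp contDiff_snd
  have b1 : ContDiff ℝ 1 (fun z : E3 × E3 => mdot α β w z.1) :=
    (contDiff_mdot_right w).comp contDiff_fst
  have b2 : ContDiff ℝ 1 (fun z : E3 × E3 => mdot α β w z.2) :=
    (contDiff_mdot_right w).comp contDiff_snd
  refine ContDiff.div (by fun_prop) (by fun_prop) fun z => (denom_pos hw z).ne'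

/-- The directional derivative of the shift, which determines the Jacobian of `collT`. -/
theorem fderiv_shift_apply {w : E3} (hw : mdot α β w w = 1) (z : E3 × E3) :
    fderiv ℝ (shift α β w) z (w, -w) =
      -(pZ α β (collT α β w z).1 * pZ α β (collT α β w z).2) / (pZ α β z.1 * pZ α β z.2) - 1 := by
  have hd : HasFDerivAt (shift α β w) (fderiv ℝ (shift α β w) z) z :=
    ((contDiff_shift hw).differentiable one_ne_zero z).hasFDerivAt
  have hl := hd.hasLineDerivAt (w, -w)
  have hs := scalar_deriv (pZ_pos (α := α) (β := β) z.1) (pZ_pos (α := α) (β := β) z.2)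
    (mdot_sq_lt hw z.1) (mdot_sq_lt hw z.2)
  rw [pZ_collT_fst hw, pZ_collT_snd hw]
  refine HasDerivAt.unique (hl : HasDerivAt _ _ _) ?_
  refine hs.congr_of_eventuallyEq (Filter.Eventually.of_forall fun t => ?_)
  change shift α β w (z + t • (w, -w)) = _
  have e1 : (z + t • (w, -w)).1 = z.1 + t • w := rfl
  have e2 : (z + t • (w, -w)).2 = z.2 - t • w := by simp [sub_eq_add_neg]
  rw [shift, e1, e2, pZ_add_smul hw, pZ_sub_smul hw, mdot_add_right, mdot_sub_right,
    mdot_smul_right, hw]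
  congr 1 <;> ring

theorem hasFDerivAt_collT {w : E3} (hw : mdot α β w w = 1) (z : E3 × E3) :
    HasFDerivAt (collT α β w)
      (ContinuousLinearMap.id ℝ (E3 × E3) + (fderiv ℝ (shift α β w) z).smulRight (w, -w)) z := by
  have hd : HasFDerivAt (shift α β w) (fderiv ℝ (shift α β w) z) z :=
    ((contDiff_shift hw).differentiable one_ne_zero z).hasFDerivAt
  exact (hasFDerivAt_id z).add (hd.smul_const (w, -w))

/-- Glassey's Jacobian `|∂(p̄′,q̄′)/∂(p̄,q̄)| = p′⁰q′⁰/(p⁰q⁰)`. The derivative of `collT` is a rank-one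
perturbation of the identity, so its determinant is one plus a directional derivative. -/
theorem abs_det_collT {w : E3} (hw : mdot α β w w = 1) (z : E3 × E3) :
    |(ContinuousLinearMap.id ℝ (E3 × E3) + (fderiv ℝ (shift α β w) z).smulRight (w, -w)).det| =
      (pZ α β (collT α β w z).1 * pZ α β (collT α β w z).2) / (pZ α β z.1 * pZ α β z.2) := by
  have h : (ContinuousLinearMap.id ℝ (E3 × E3) +
      (fderiv ℝ (shift α β w) z).smulRight (w, -w)).det =
      1 + fderiv ℝ (shift α β w) z (w, -w) :=
    LinearMap.transvection.det (R := ℝ) (fderiv ℝ (shift α β w) z).toLinearMap (w, -w)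
  have p1 := pZ_pos (α := α) (β := β) z.1
  have p2 := pZ_pos (α := α) (β := β) z.2
  have p3 := pZ_pos (α := α) (β := β) (collT α β w z).1
  have p4 := pZ_pos (α := α) (β := β) (collT α β w z).2
  rw [h, fderiv_shift_apply hw, add_sub_cancel, neg_div, abs_neg, abs_of_pos (by positivity)]

/-- The measure `dp̄ dq̄ / (p⁰q⁰)` is not increased by collisions; since `1/(p⁰q⁰) ≤ 1`, the
integral on the left is bounded by the plain Lebesgue integral. -/
theorem lintegral_collT_le {w : E3} (hw : mdot α β w w = 1) (F : E3 × E3 → ENNReal) :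
    ∫⁻ z : E3 × E3, ENNReal.ofReal ((pZ α β z.1)⁻¹ * (pZ α β z.2)⁻¹) * F (collT α β w z)
      ≤ ∫⁻ z, F z := by
  have : (volume : Measure (E3 × E3)).IsAddHaarMeasure :=
    Measure.prod.instIsAddHaarMeasure volume volume
  have hcov := lintegral_image_eq_lintegral_abs_det_fderiv_mul (volume : Measure (E3 × E3))
    MeasurableSet.univ (fun z _ => (hasFDerivAt_collT hw z).hasFDerivWithinAt)
    (Function.LeftInverse.injective (collT_collT hw)).injOn
    (fun z => ENNReal.ofReal ((pZ α β z.1)⁻¹ * (pZ α β z.2)⁻¹) * F z)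
  rw [Measure.restrict_univ] at hcov
  calc _ = ∫⁻ z in collT α β w '' Set.univ,
        ENNReal.ofReal ((pZ α β z.1)⁻¹ * (pZ α β z.2)⁻¹) * F z := by
        rw [hcov]
        refine lintegral_congr fun z => ?_
        have p1 := pZ_pos (α := α) (β := β) z.1
        have p2 := pZ_pos (α := α) (β := β) z.2
        have p3 := pZ_pos (α := α) (β := β) (collT α β w z).1
        have p4 := pZ_pos (α := α) (β := β) (collT α β w z).2
        rw [abs_det_collT hw, ← mul_assoc, ← ENNReal.ofReal_mul (by positivity)]
        congr 2
        field_simp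
    _ ≤ ∫⁻ z : E3 × E3, ENNReal.ofReal ((pZ α β z.1)⁻¹ * (pZ α β z.2)⁻¹) * F z :=
        setLIntegral_le_lintegral _ _
    _ ≤ ∫⁻ z, F z := by
        refine lintegral_mono fun z => ?_
        refine mul_le_of_le_one_left' ?_
        rw [ENNReal.ofReal_le_one]
        exact mul_le_one₀ (inv_le_one_of_one_le₀ (one_le_pZ _))
          (inv_nonneg.2 (pZ_pos _).le) (inv_le_one_of_one_le₀ (one_le_pZ _))

end Geometry

/-! ### Measurability and the total mass of the sphere -/

section Measurability

variable {α β : ℝ}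

instance : IsFiniteMeasure sphMeas := by unfold sphMeas; infer_instance

theorem sphMeas_univ : sphMeas Set.univ = ENNReal.ofReal (4 * π) := by
  rw [sphMeas, Measure.toSphere_apply_univ, EuclideanSpace.volume_ball_fin_three]
  simp only [finrank_euclideanSpace, Fintype.card_fin, ENNReal.ofReal_one, one_pow, one_mul]
  rw [show ((3 : ℕ) : ENNReal) = ENNReal.ofReal 3 by simp, ← ENNReal.ofReal_mul (by norm_num)]
  congr 1; ring

theorem sphMeas_real_univ : sphMeas.real Set.univ = 4 * π := by
  rw [Measure.real, sphMeas_univ, ENNReal.toReal_ofReal (by positivity)]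

variable {X : Type*} [MeasurableSpace X]

theorem measurable_mdot {a b : X → E3} (ha : Measurable a) (hb : Measurable b) :
    Measurable fun x => mdot α β (a x) (b x) := by
  have h : Continuous fun z : E3 × E3 => mdot α β z.1 z.2 := by unfold mdot; fun_prop
  exact h.measurable.comp (ha.prodMk hb)

theorem measurable_pZ {a : X → E3} (ha : Measurable a) : Measurable fun x => pZ α β (a x) :=
  contDiff_pZ.continuous.measurable.comp ha

theorem measurable_omHat {a : X → E3} (ha : Measurable a) :
    Measurable fun x => omHat α β (a x) := by
  unfold omHat
  exact (measurable_mdot ha ha).sqrt.inv.smul ha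

theorem measurable_collC {a b c : X → E3} (ha : Measurable a) (hb : Measurable b)
    (hc : Measurable c) : Measurable fun x => collC α β (a x) (b x) (c x) := by
  simp only [collC_eq, shift]
  have h1 := measurable_pZ (α := α) (β := β) ha
  have h2 := measurable_pZ (α := α) (β := β) hb
  have hw := measurable_omHat (α := α) (β := β) hc
  have h3 := measurable_mdot (α := α) (β := β) hw ha
  have h4 := measurable_mdot (α := α) (β := β) hw hb
  fun_prop

theorem measurable_pPr {a b c : X → E3} (ha : Measurable a) (hb : Measurable b)
    (hc : Measurable c) : Measurable fun x => pPr α β (a x) (b x) (c x) := by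
  unfold pPr
  exact ha.add ((measurable_collC ha hb hc).smul (measurable_omHat hc))

theorem measurable_qPr {a b c : X → E3} (ha : Measurable a) (hb : Measurable b)
    (hc : Measurable c) : Measurable fun x => qPr α β (a x) (b x) (c x) := by
  unfold qPr
  exact hb.sub ((measurable_collC ha hb hc).smul (measurable_omHat hc))

theorem measurable_S {S₀ : E3 → E3 → E3 → E3 → ℝ}
    (hS : Measurable fun x : (E3 × E3) × E3 × E3 => S₀ x.1.1 x.1.2 x.2.1 x.2.2)
    {a b c : X → E3} (ha : Measurable a) (hb : Measurable b) (hc : Measurable c) :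
    Measurable fun x =>
      S₀ (a x) (b x) (pPr α β (a x) (b x) (c x)) (qPr α β (a x) (b x) (c x)) :=
  hS.comp ((ha.prodMk hb).prodMk ((measurable_pPr ha hb hc).prodMk (measurable_qPr ha hb hc)))

end Measurability

/-! ### The gain term -/

section Gain

variable {α β C₁ : ℝ} {S₀ : E3 → E3 → E3 → E3 → ℝ} {f g : E3 → ℝ}

/-- The integrand of `(1/p⁰) Q⁺(f,g)` as a function of `(p̄, (q̄, ω))`, without the factor `αβ²`. -/
noncomputable def gainK (α β : ℝ) (S₀ : E3 → E3 → E3 → E3 → ℝ) (f g : E3 → ℝ)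
    (x : E3 × (E3 × Metric.sphere (0 : E3) 1)) : ℝ :=
  (pZ α β x.1)⁻¹ * ((pZ α β x.2.1)⁻¹ *
    (f (pPr α β x.1 x.2.1 x.2.2) * g (qPr α β x.1 x.2.1 x.2.2) *
      S₀ x.1 x.2.1 (pPr α β x.1 x.2.1 x.2.2) (qPr α β x.1 x.2.1 x.2.2)))

theorem measurable_gainK
    (hS : Measurable fun x : (E3 × E3) × E3 × E3 => S₀ x.1.1 x.1.2 x.2.1 x.2.2)
    (hf : Measurable f) (hg : Measurable g) : Measurable (gainK α β S₀ f g) := by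
  have m1 : Measurable fun x : E3 × (E3 × Metric.sphere (0 : E3) 1) => x.1 := measurable_fst
  have m2 : Measurable fun x : E3 × (E3 × Metric.sphere (0 : E3) 1) => x.2.1 := by fun_prop
  have m3 : Measurable fun x : E3 × (E3 × Metric.sphere (0 : E3) 1) => (x.2.2 : E3) := by fun_prop
  unfold gainK
  exact (measurable_pZ m1).inv.mul ((measurable_pZ m2).inv.mul
    (((hf.comp (measurable_pPr m1 m2 m3)).mul (hg.comp (measurable_qPr m1 m2 m3))).mul
      (measurable_S hS m1 m2 m3)))

/-- The `L¹` bound behind all gain estimates: Tonelli puts the direction `ω` outermost, and for fixed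
`ω` the collision transformation is removed by `lintegral_collT_le`. -/
theorem lintegral_gainK_le (hα : 0 < α) (hβ : 0 < β)
    (hS : Measurable fun x : (E3 × E3) × E3 × E3 => S₀ x.1.1 x.1.2 x.2.1 x.2.2)
    (hS0 : ∀ p q p' q', 0 ≤ S₀ p q p' q') (hSC : ∀ p q p' q', S₀ p q p' q' ≤ C₁)
    (hf : Measurable f) (hg : Measurable g) :
    ∫⁻ x, ‖gainK α β S₀ f g x‖ₑ ∂((volume : Measure E3).prod ((volume : Measure E3).prod sphMeas))
      ≤ ENNReal.ofReal (4 * π * C₁) * ((∫⁻ p, ‖f p‖ₑ) * ∫⁻ q, ‖g q‖ₑ) := by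
  have hK := measurable_gainK (α := α) (β := β) hS hf hg
  have hassoc := (measurePreserving_prodAssoc (volume : Measure E3) (volume : Measure E3)
    sphMeas).lintegral_comp hK.enorm
  rw [← hassoc, lintegral_prod_symm _ (by
    exact (hK.enorm.comp MeasurableEquiv.prodAssoc.measurable).aemeasurable)]
  have hω : ∀ ω : Metric.sphere (0 : E3) 1,
      ∫⁻ z : E3 × E3, ‖gainK α β S₀ f g (MeasurableEquiv.prodAssoc (z, ω))‖ₑ
        ∂((volume : Measure E3).prod volume) ≤
      ENNReal.ofReal C₁ * ((∫⁻ p, ‖f p‖ₑ) * ∫⁻ q, ‖g q‖ₑ) := by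
    intro ω
    have hω0 : (ω : E3) ≠ 0 := by
      intro h0
      have := ω.2
      simp [h0] at this
    have hw := mdot_omHat hα hβ hω0
    calc _ ≤ ∫⁻ z : E3 × E3, ENNReal.ofReal C₁ *
          (ENNReal.ofReal ((pZ α β z.1)⁻¹ * (pZ α β z.2)⁻¹) *
            (fun z' : E3 × E3 => ‖f z'.1‖ₑ * ‖g z'.2‖ₑ) (collT α β (omHat α β ω) z)) := by
          refine lintegral_mono fun z => ?_
          have p1 := pZ_pos (α := α) (β := β) z.1
          have p2 := pZ_pos (α := α) (β := β) z.2
          change ‖gainK α β S₀ f g (z.1, (z.2, ω))‖ₑ ≤ _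
          simp only [gainK, enorm_mul]
          rw [pPr_eq, qPr_eq, ENNReal.ofReal_mul (by positivity),
            Real.enorm_of_nonneg (inv_nonneg.2 p1.le), Real.enorm_of_nonneg (inv_nonneg.2 p2.le),
            Real.enorm_of_nonneg (hS0 _ _ _ _)]
          have hb := ENNReal.ofReal_le_ofReal (hSC z.1 z.2
            (collT α β (omHat α β ω) (z.1, z.2)).1 (collT α β (omHat α β ω) (z.1, z.2)).2)
          calc _ ≤ ENNReal.ofReal (pZ α β z.1)⁻¹ * (ENNReal.ofReal (pZ α β z.2)⁻¹ *
                (‖f (collT α β (omHat α β ω) (z.1, z.2)).1‖ₑ *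
                  ‖g (collT α β (omHat α β ω) (z.1, z.2)).2‖ₑ * ENNReal.ofReal C₁)) := by gcongr
            _ = _ := by simp only [Prod.mk.eta]; ring
      _ ≤ ENNReal.ofReal C₁ * ∫⁻ z : E3 × E3, ‖f z.1‖ₑ * ‖g z.2‖ₑ := by
          rw [lintegral_const_mul' _ _ ENNReal.ofReal_ne_top]
          refine mul_le_mul_right ?_ _
          exact lintegral_collT_le hw (fun z' : E3 × E3 => ‖f z'.1‖ₑ * ‖g z'.2‖ₑ)
      _ = _ := by
          congr 1
          exact lintegral_prod_mul hf.enorm.aemeasurable hg.enorm.aemeasurable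
  calc _ ≤ ∫⁻ _ω : Metric.sphere (0 : E3) 1,
        ENNReal.ofReal C₁ * ((∫⁻ p, ‖f p‖ₑ) * ∫⁻ q, ‖g q‖ₑ) ∂sphMeas := lintegral_mono hω
    _ = _ := by
        rw [lintegral_const, sphMeas_univ, ENNReal.ofReal_mul (p := 4 * π) (by positivity)]
        ring

/-- The section-wise integral of `gainK`; it coincides almost everywhere with `(1/p⁰) Q⁺(f,g)`, and
is additive in `f` and `g` almost everywhere. -/
noncomputable def gain (α β : ℝ) (S₀ : E3 → E3 → E3 → E3 → ℝ) (f g : E3 → ℝ) (p : E3) : ℝ :=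
  α * β ^ 2 * ∫ z, gainK α β S₀ f g (p, z) ∂((volume : Measure E3).prod sphMeas)

theorem lintegral_gainK_le' (hα : 0 < α) (hβ : 0 < β) (hC₁ : 0 < C₁)
    (hS : Measurable fun x : (E3 × E3) × E3 × E3 => S₀ x.1.1 x.1.2 x.2.1 x.2.2)
    (hS0 : ∀ p q p' q', 0 ≤ S₀ p q p' q') (hSC : ∀ p q p' q', S₀ p q p' q' ≤ C₁)
    (hf : Measurable f) (hg : Measurable g) (hfi : Integrable f) (hgi : Integrable g) :
    ∫⁻ x, ‖gainK α β S₀ f g x‖ₑ ∂((volume : Measure E3).prod ((volume : Measure E3).prod sphMeas))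
      ≤ ENNReal.ofReal (4 * π * C₁ * ((∫ p, |f p|) * ∫ q, |g q|)) := by
  refine (lintegral_gainK_le hα hβ hS hS0 hSC hf hg).trans_eq ?_
  rw [← ofReal_integral_norm_eq_lintegral_enorm hfi, ← ofReal_integral_norm_eq_lintegral_enorm hgi,
    ← ENNReal.ofReal_mul (by positivity), ← ENNReal.ofReal_mul (by positivity)]
  rfl

theorem integrable_gainK (hα : 0 < α) (hβ : 0 < β) (hC₁ : 0 < C₁)
    (hS : Measurable fun x : (E3 × E3) × E3 × E3 => S₀ x.1.1 x.1.2 x.2.1 x.2.2)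
    (hS0 : ∀ p q p' q', 0 ≤ S₀ p q p' q') (hSC : ∀ p q p' q', S₀ p q p' q' ≤ C₁)
    (hf : Measurable f) (hg : Measurable g) (hfi : Integrable f) (hgi : Integrable g) :
    Integrable (gainK α β S₀ f g)
    ((volume : Measure E3).prod ((volume : Measure E3).prod sphMeas)) :=
  ⟨(measurable_gainK hS hf hg).aestronglyMeasurable,
    (lintegral_gainK_le' hα hβ hC₁ hS hS0 hSC hf hg hfi hgi).trans_lt ENNReal.ofReal_lt_top⟩

theorem integrable_gain (hα : 0 < α) (hβ : 0 < β) (hC₁ : 0 < C₁)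
    (hS : Measurable fun x : (E3 × E3) × E3 × E3 => S₀ x.1.1 x.1.2 x.2.1 x.2.2)
    (hS0 : ∀ p q p' q', 0 ≤ S₀ p q p' q') (hSC : ∀ p q p' q', S₀ p q p' q' ≤ C₁)
    (hf : Measurable f) (hg : Measurable g) (hfi : Integrable f) (hgi : Integrable g) :
    Integrable (gain α β S₀ f g) :=
  (integrable_gainK hα hβ hC₁ hS hS0 hSC hf hg hfi hgi).integral_prod_left.const_mul _

theorem integral_abs_gain_le (hα : 0 < α) (hβ : 0 < β) (hC₁ : 0 < C₁)
    (hS : Measurable fun x : (E3 × E3) × E3 × E3 => S₀ x.1.1 x.1.2 x.2.1 x.2.2)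
    (hS0 : ∀ p q p' q', 0 ≤ S₀ p q p' q') (hSC : ∀ p q p' q', S₀ p q p' q' ≤ C₁)
    (hf : Measurable f) (hg : Measurable g) (hfi : Integrable f) (hgi : Integrable g) :
    ∫ p, |gain α β S₀ f g p| ≤
    4 * π * C₁ * α * β ^ 2 * ((∫ p, |f p|) * ∫ q, |g q|) := by
  have hK := integrable_gainK hα hβ hC₁ hS hS0 hSC hf hg hfi hgi
  have h1 : ∫ p, |gain α β S₀ f g p| ≤
      ∫ p, α * β ^ 2 * ∫ z, ‖gainK α β S₀ f g (p, z)‖ ∂((volume : Measure E3).prod sphMeas) := by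
    refine integral_mono (integrable_gain hα hβ hC₁ hS hS0 hSC hf hg hfi hgi).abs
      (hK.integral_norm_prod_left.const_mul _) fun p => ?_
    simp only [gain, abs_mul, abs_of_pos (show 0 < α by assumption),
      abs_of_pos (show 0 < β ^ 2 by positivity)]
    gcongr
    exact norm_integral_le_integral_norm (fun z => gainK α β S₀ f g (p, z))
  have h2 : ∫ x, ‖gainK α β S₀ f g x‖
      ∂((volume : Measure E3).prod ((volume : Measure E3).prod sphMeas)) ≤
      4 * π * C₁ * ((∫ p, |f p|) * ∫ q, |g q|) := by
    rw [integral_norm_eq_lintegral_enorm hK.1]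
    refine ENNReal.toReal_le_of_le_ofReal ?_
      (lintegral_gainK_le' hα hβ hC₁ hS hS0 hSC hf hg hfi hgi)
    have : 0 ≤ ∫ p, |f p| := integral_nonneg fun _ => abs_nonneg _
    have : 0 ≤ ∫ p, |g p| := integral_nonneg fun _ => abs_nonneg _
    positivity
  rw [integral_const_mul, ← integral_prod _ hK.norm] at h1
  calc _ ≤ _ := h1
    _ ≤ α * β ^ 2 * (4 * π * C₁ * ((∫ p, |f p|) * ∫ q, |g q|)) := by gcongr
    _ = _ := by ring

theorem Qplus_ae_eq_gain (hα : 0 < α) (hβ : 0 < β) (hC₁ : 0 < C₁)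
    (hS : Measurable fun x : (E3 × E3) × E3 × E3 => S₀ x.1.1 x.1.2 x.2.1 x.2.2)
    (hS0 : ∀ p q p' q', 0 ≤ S₀ p q p' q') (hSC : ∀ p q p' q', S₀ p q p' q' ≤ C₁)
    (hf : Measurable f) (hg : Measurable g) (hfi : Integrable f) (hgi : Integrable g) :
    ∀ᵐ p : E3, (pZ α β p)⁻¹ * Qplus α β S₀ f g p = gain α β S₀ f g p := by
  filter_upwards [(integrable_gainK hα hβ hC₁ hS hS0 hSC hf hg hfi hgi).prod_right_ae] with p hp
  rw [gain, integral_prod _ hp, Qplus]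
  simp only [gainK, integral_const_mul]
  ring

end Gain

/-- Polarization `Q⁺(h,h) - Q⁺(g,g) = Q⁺(h-g,h) + Q⁺(g,h-g)`. -/
theorem gain_sub_ae {α β C₁ : ℝ} {S₀ : E3 → E3 → E3 → E3 → ℝ} {h g : E3 → ℝ}
    (hα : 0 < α) (hβ : 0 < β) (hC₁ : 0 < C₁)
    (hS : Measurable fun x : (E3 × E3) × E3 × E3 => S₀ x.1.1 x.1.2 x.2.1 x.2.2)
    (hS0 : ∀ p q p' q', 0 ≤ S₀ p q p' q') (hSC : ∀ p q p' q', S₀ p q p' q' ≤ C₁)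
    (hh : Measurable h) (hg : Measurable g) (hhi : Integrable h) (hgi : Integrable g) :
    ∀ᵐ p : E3, gain α β S₀ h h p - gain α β S₀ g g p =
      gain α β S₀ (fun p => h p - g p) h p + gain α β S₀ g (fun p => h p - g p) p := by
  have hu : Measurable fun p => h p - g p := hh.sub hg
  have hui : Integrable fun p => h p - g p := hhi.sub hgi
  filter_upwards [(integrable_gainK hα hβ hC₁ hS hS0 hSC hh hh hhi hhi).prod_right_ae,
    (integrable_gainK hα hβ hC₁ hS hS0 hSC hg hg hgi hgi).prod_right_ae,
    (integrable_gainK hα hβ hC₁ hS hS0 hSC hu hh hui hhi).prod_right_ae,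
    (integrable_gainK hα hβ hC₁ hS hS0 hSC hg hu hgi hui).prod_right_ae] with p h1 h2 h3 h4
  simp only [gain]
  rw [← mul_sub, ← mul_add, ← integral_sub h1 h2, ← integral_add h3 h4]
  congr 2
  funext z
  simp only [gainK]
  ring

/-! ### The loss term -/

section Loss

variable {α β C₁ : ℝ} {S₀ : E3 → E3 → E3 → E3 → ℝ} {f g : E3 → ℝ}

/-- The collision kernel integrated over the scattering direction. -/
noncomputable def sigma (α β : ℝ) (S₀ : E3 → E3 → E3 → E3 → ℝ) (p q : E3) : ℝ :=
  ∫ ω : Metric.sphere (0 : E3) 1, S₀ p q (pPr α β p q ω) (qPr α β p q ω) ∂sphMeas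

theorem sigma_nonneg (hS0 : ∀ p q p' q', 0 ≤ S₀ p q p' q') (p q : E3) : 0 ≤ sigma α β S₀ p q :=
  integral_nonneg fun _ => hS0 _ _ _ _

theorem sigma_le (hS0 : ∀ p q p' q', 0 ≤ S₀ p q p' q') (hSC : ∀ p q p' q', S₀ p q p' q' ≤ C₁)
    (p q : E3) : sigma α β S₀ p q ≤ 4 * π * C₁ := by
  calc sigma α β S₀ p q ≤ ∫ _ω : Metric.sphere (0 : E3) 1, C₁ ∂sphMeas :=
        integral_mono_of_nonneg (Filter.Eventually.of_forall fun _ => hS0 _ _ _ _)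
          (integrable_const _) (Filter.Eventually.of_forall fun _ => hSC _ _ _ _)
    _ = 4 * π * C₁ := by rw [integral_const, sphMeas_real_univ, smul_eq_mul]

theorem stronglyMeasurable_sigma
    (hS : Measurable fun x : (E3 × E3) × E3 × E3 => S₀ x.1.1 x.1.2 x.2.1 x.2.2) :
    StronglyMeasurable fun x : E3 × E3 => sigma α β S₀ x.1 x.2 := by
  have m1 : Measurable fun x : (E3 × E3) × Metric.sphere (0 : E3) 1 => x.1.1 := by fun_prop
  have m2 : Measurable fun x : (E3 × E3) × Metric.sphere (0 : E3) 1 => x.1.2 := by fun_prop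
  have m3 : Measurable fun x : (E3 × E3) × Metric.sphere (0 : E3) 1 => (x.2 : E3) := by fun_prop
  exact (measurable_S (α := α) (β := β) hS m1 m2 m3).stronglyMeasurable.integral_prod_right'

/-- The damping coefficient `(1/p⁰) Q⁻(𝟙,f)`. -/
noncomputable def loss (α β : ℝ) (S₀ : E3 → E3 → E3 → E3 → ℝ) (f : E3 → ℝ) (p : E3) : ℝ :=
  (pZ α β p)⁻¹ * Qminus α β S₀ (fun _ => 1) f p

theorem loss_eq (p : E3) : loss α β S₀ f p =
    (pZ α β p)⁻¹ * (α * β ^ 2 * ∫ q, (pZ α β q)⁻¹ * (f q * sigma α β S₀ p q)) := by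
  simp only [loss, Qminus, one_mul, integral_const_mul, sigma]

theorem measurable_loss
    (hS : Measurable fun x : (E3 × E3) × E3 × E3 => S₀ x.1.1 x.1.2 x.2.1 x.2.2)
    (hf : Measurable f) : Measurable (loss α β S₀ f) := by
  have hi : StronglyMeasurable fun p : E3 =>
      ∫ q, (pZ α β q)⁻¹ * (f q * sigma α β S₀ p q) := by
    refine StronglyMeasurable.integral_prod_right'
      (f := fun x : E3 × E3 => (pZ α β x.2)⁻¹ * (f x.2 * sigma α β S₀ x.1 x.2)) ?_
    exact ((measurable_pZ measurable_snd).inv.mul ((hf.comp measurable_snd).mul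
      (stronglyMeasurable_sigma hS).measurable)).stronglyMeasurable
  have : loss α β S₀ f = fun p => (pZ α β p)⁻¹ *
      (α * β ^ 2 * ∫ q, (pZ α β q)⁻¹ * (f q * sigma α β S₀ p q)) := funext loss_eq
  rw [this]
  exact (measurable_pZ measurable_id).inv.mul (hi.measurable.const_mul _)

theorem loss_nonneg (hα : 0 < α) (hS0 : ∀ p q p' q', 0 ≤ S₀ p q p' q')
    (hf0 : 0 ≤ᵐ[volume] f) (p : E3) : 0 ≤ loss α β S₀ f p := by
  rw [loss_eq]
  have h1 := (pZ_pos (α := α) (β := β) p).le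
  have h2 : 0 ≤ ∫ q, (pZ α β q)⁻¹ * (f q * sigma α β S₀ p q) := by
    refine integral_nonneg_of_ae ?_
    filter_upwards [hf0] with q hq
    exact mul_nonneg (inv_nonneg.2 (pZ_pos q).le) (mul_nonneg hq (sigma_nonneg hS0 p q))
  positivity

theorem abs_lossK_le (hS0 : ∀ p q p' q', 0 ≤ S₀ p q p' q')
    (hSC : ∀ p q p' q', S₀ p q p' q' ≤ C₁) (p q : E3) :
    |(pZ α β q)⁻¹ * (f q * sigma α β S₀ p q)| ≤ 4 * π * C₁ * |f q| := by
  have h1 := sigma_nonneg (α := α) (β := β) hS0 p q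
  have h2 := sigma_le (α := α) (β := β) hS0 hSC p q
  have h3 : (pZ α β q)⁻¹ ≤ 1 := inv_le_one_of_one_le₀ (one_le_pZ q)
  have h4 : 0 ≤ (pZ α β q)⁻¹ := inv_nonneg.2 (pZ_pos q).le
  rw [abs_mul, abs_mul, abs_of_nonneg h1, abs_of_nonneg h4]
  calc _ ≤ 1 * (|f q| * (4 * π * C₁)) := by gcongr
    _ = _ := by ring

theorem integrable_lossK
    (hS : Measurable fun x : (E3 × E3) × E3 × E3 => S₀ x.1.1 x.1.2 x.2.1 x.2.2)
    (hS0 : ∀ p q p' q', 0 ≤ S₀ p q p' q')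
    (hSC : ∀ p q p' q', S₀ p q p' q' ≤ C₁) (hf : Measurable f) (hfi : Integrable f) (p : E3) :
    Integrable fun q => (pZ α β q)⁻¹ * (f q * sigma α β S₀ p q) := by
  refine (hfi.abs.const_mul (4 * π * C₁)).mono' ?_
    (Filter.Eventually.of_forall fun q => abs_lossK_le hS0 hSC p q)
  exact ((measurable_pZ measurable_id).inv.mul (hf.mul
    ((stronglyMeasurable_sigma hS).measurable.comp measurable_prodMk_left))).aestronglyMeasurable

theorem abs_loss_sub_le (hα : 0 < α) (hβ : 0 < β)
    (hS : Measurable fun x : (E3 × E3) × E3 × E3 => S₀ x.1.1 x.1.2 x.2.1 x.2.2)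
    (hS0 : ∀ p q p' q', 0 ≤ S₀ p q p' q') (hSC : ∀ p q p' q', S₀ p q p' q' ≤ C₁)
    (hf : Measurable f) (hg : Measurable g) (hfi : Integrable f) (hgi : Integrable g) (p : E3) :
    |loss α β S₀ f p - loss α β S₀ g p| ≤ 4 * π * C₁ * α * β ^ 2 * ∫ q, |f q - g q| := by
  have hd : loss α β S₀ f p - loss α β S₀ g p = (pZ α β p)⁻¹ *
      (α * β ^ 2 * ∫ q, (pZ α β q)⁻¹ * ((fun q => f q - g q) q * sigma α β S₀ p q)) := by
    rw [loss_eq, loss_eq, ← mul_sub, ← mul_sub,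
      ← integral_sub (integrable_lossK hS hS0 hSC hf hfi p)
        (integrable_lossK hS hS0 hSC hg hgi p)]
    congr 3
    funext q
    ring
  have hi : |∫ q, (pZ α β q)⁻¹ * ((fun q => f q - g q) q * sigma α β S₀ p q)| ≤
      4 * π * C₁ * ∫ q, |f q - g q| := by
    rw [← integral_const_mul, ← Real.norm_eq_abs]
    have hbi : Integrable fun q => 4 * π * C₁ * |f q - g q| := (hfi.sub hgi).abs.const_mul _
    refine norm_integral_le_of_norm_le hbi (Filter.Eventually.of_forall fun q => ?_)
    exact abs_lossK_le (f := fun q => f q - g q) hS0 hSC p q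
  have h3 : (pZ α β p)⁻¹ ≤ 1 := inv_le_one_of_one_le₀ (one_le_pZ p)
  have h4 : 0 ≤ (pZ α β p)⁻¹ := inv_nonneg.2 (pZ_pos p).le
  rw [hd, abs_mul, abs_of_nonneg h4, abs_mul, abs_of_pos (show 0 < α * β ^ 2 by positivity)]
  calc _ ≤ 1 * (α * β ^ 2 * (4 * π * C₁ * ∫ q, |f q - g q|)) := by gcongr
    _ = _ := by ring

end Loss

/-! ### The estimates for `F_n` -/

theorem abs_div_sub_div_le {N₁ N₂ L₁ L₂ s : ℝ} (hs : 1 ≤ s) (h₁ : 0 ≤ L₁) (h₂ : 0 ≤ L₂) :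
    |N₁ / (s + L₁) - N₂ / (s + L₂)| ≤ |N₁ - N₂| / s + |N₂| * |L₁ - L₂| / s := by
  have e : N₁ / (s + L₁) - N₂ / (s + L₂) =
      (N₁ - N₂) / (s + L₁) + N₂ * (L₂ - L₁) / ((s + L₁) * (s + L₂)) := by
    have : s + L₁ ≠ 0 := by positivity
    have : s + L₂ ≠ 0 := by positivity
    field_simp
    ring
  rw [e]
  refine (abs_add_le _ _).trans (add_le_add ?_ ?_)
  · rw [abs_div, abs_of_pos (show 0 < s + L₁ by positivity)]
    gcongr
    linarith
  · rw [abs_div, abs_mul, abs_sub_comm L₂ L₁,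
      abs_of_pos (show 0 < (s + L₁) * (s + L₂) by positivity)]
    gcongr
    nlinarith [mul_nonneg h₁ h₂]

theorem statement_17
    (C₀ C₁ α β : ℝ) (hC₀ : 0 < C₀) (hC₁ : 0 < C₁) (hα : C₀ ≤ α) (hβ : C₀ ≤ β)
    (S₀ : E3 → E3 → E3 → E3 → ℝ)
    (hS₀meas : Measurable fun x : (E3 × E3) × E3 × E3 => S₀ x.1.1 x.1.2 x.2.1 x.2.2)
    (hS₀nonneg : ∀ p q p' q', 0 ≤ S₀ p q p' q')
    (hS₀bdd : ∀ p q p' q', S₀ p q p' q' ≤ C₁)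
    (hS₀symm : ∀ p q p' q', S₀ p q p' q' = S₀ p' q' p q)
    (r : ℝ) (hr : 0 < r) (n : ℕ) (hn : 1 ≤ n) (v h g : L1)
    (hv : memX r v) (hh : memX r h) (hg : memX r g) :
    Integrable (fun p : E3 => Fmap α β S₀ n (⇑v) (⇑h) p) volume ∧
    (∫ p : E3, |Fmap α β S₀ n (⇑v) (⇑h) p| ≤ r * (1 + 4 * Real.pi * C₁ * α * β ^ 2 * r) / Real.sqrt n) ∧
    ∫ p : E3, |Fmap α β S₀ n (⇑v) (⇑h) p - Fmap α β S₀ n (⇑v) (⇑g) p| ≤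
      3 * (4 * Real.pi * C₁ * α * β ^ 2) * r * (1 + 4 * Real.pi * C₁ * α * β ^ 2 * r) / Real.sqrt n * ‖h - g‖ := by
  have hα0 : 0 < α := hC₀.trans_le hα
  have hβ0 : 0 < β := hC₀.trans_le hβ
  have hs : 1 ≤ √(n : ℝ) := Real.one_le_sqrt.2 (by exact_mod_cast hn)
  have hs0 : 0 < √(n : ℝ) := zero_lt_one.trans_le hs
  have meas : ∀ f : L1, Measurable (⇑f : E3 → ℝ) := fun f => (Lp.stronglyMeasurable f).measurable
  have int : ∀ f : L1, Integrable (⇑f : E3 → ℝ) := fun f => L1.integrable_coeFn f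
  have nrm : ∀ f : L1, ∫ p, |f p| = ‖f‖ := fun f => (L1.norm_eq_integral_norm f).symm
  have hu : Measurable fun p => h p - g p := (meas h).sub (meas g)
  have hui : Integrable fun p => h p - g p := (int h).sub (int g)
  have nu : ∫ p, |h p - g p| = ‖h - g‖ := by
    rw [← nrm]
    refine integral_congr_ae ?_
    filter_upwards [Lp.coeFn_sub h g] with p hp
    rw [hp, Pi.sub_apply]
  set C : ℝ := 4 * π * C₁ * α * β ^ 2 with hC
  have hC0 : 0 < C := by positivity
  have Fae : ∀ f : L1, ∀ᵐ p : E3, Fmap α β S₀ n (⇑v) (⇑f) p =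
      (v p + gain α β S₀ f f p) / (√n + loss α β S₀ f p) := by
    intro f
    filter_upwards [Qplus_ae_eq_gain hα0 hβ0 hC₁ hS₀meas hS₀nonneg hS₀bdd (meas f) (meas f)
      (int f) (int f)] with p hp
    rw [Fmap, hp, loss]
  have gi : ∀ f : L1, Integrable (gain α β S₀ f f) := fun f =>
    integrable_gain hα0 hβ0 hC₁ hS₀meas hS₀nonneg hS₀bdd (meas f) (meas f) (int f) (int f)
  have gb : ∀ f : L1, memX r f → ∫ p, |gain α β S₀ f f p| ≤ C * (r * r) := by
    intro f hf
    have := integral_abs_gain_le hα0 hβ0 hC₁ hS₀meas hS₀nonneg hS₀bdd (meas f) (meas f)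
      (int f) (int f)
    rw [nrm] at this
    refine this.trans ?_
    have := hf.2
    gcongr
  -- the numerator of `F_n(f)` is dominated by an integrable function of mass at most `r (1 + C r)`
  have ni : ∀ f : L1, Integrable fun p => |v p| + |gain α β S₀ f f p| := fun f =>
    (int v).abs.add (gi f).abs
  have nb : ∀ f : L1, memX r f →
      ∫ p, (|v p| + |gain α β S₀ f f p|) ≤ r * (1 + C * r) := by
    intro f hf
    rw [integral_add (int v).abs (gi f).abs, nrm]
    have := gb f hf
    have := hv.2
    linarith
  have Fle : ∀ᵐ p : E3, |Fmap α β S₀ n (⇑v) (⇑h) p| ≤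
      (|v p| + |gain α β S₀ h h p|) / √n := by
    filter_upwards [Fae h] with p hp
    have hl := loss_nonneg (α := α) (β := β) hα0 hS₀nonneg hh.1 p
    rw [hp, abs_div, abs_of_pos (show 0 < √(n : ℝ) + loss α β S₀ h p by positivity)]
    gcongr
    · exact abs_add_le _ _
    · linarith
  refine ⟨?_, ?_, ?_⟩
  · refine ((ni h).div_const (√n)).mono' ?_ Fle
    refine AEStronglyMeasurable.congr ?_ ((Fae h).mono fun p hp => hp.symm)
    exact (((meas v).aemeasurable.add (gi h).aemeasurable).div
      ((measurable_loss hS₀meas (meas h)).const_add _).aemeasurable).aestronglyMeasurable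
  · refine (integral_mono_of_nonneg (Filter.Eventually.of_forall fun p => abs_nonneg _)
      ((ni h).div_const (√n)) Fle).trans ?_
    rw [integral_div]
    gcongr
    exact nb h hh
  · have ia := integrable_gain hα0 hβ0 hC₁ hS₀meas hS₀nonneg hS₀bdd hu (meas h) hui (int h)
    have ib := integrable_gain hα0 hβ0 hC₁ hS₀meas hS₀nonneg hS₀bdd (meas g) hu (int g) hui
    have ba := integral_abs_gain_le hα0 hβ0 hC₁ hS₀meas hS₀nonneg hS₀bdd hu (meas h) hui (int h)
    have bb := integral_abs_gain_le hα0 hβ0 hC₁ hS₀meas hS₀nonneg hS₀bdd (meas g) hu (int g) hui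
    rw [nu, nrm, ← hC] at ba bb
    have bound : ∀ᵐ p : E3,
        |Fmap α β S₀ n (⇑v) (⇑h) p - Fmap α β S₀ n (⇑v) (⇑g) p| ≤
        ((|gain α β S₀ (fun p => h p - g p) h p| + |gain α β S₀ g (fun p => h p - g p) p|) +
          (|v p| + |gain α β S₀ g g p|) * (C * ‖h - g‖)) / √n := by
      filter_upwards [Fae h, Fae g, gain_sub_ae hα0 hβ0 hC₁ hS₀meas hS₀nonneg hS₀bdd (meas h)
        (meas g) (int h) (int g)] with p h1 h2 h3
      have hl := abs_loss_sub_le hα0 hβ0 hS₀meas hS₀nonneg hS₀bdd (meas h) (meas g) (int h)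
        (int g) p
      rw [nu, ← hC] at hl
      rw [h1, h2]
      refine (abs_div_sub_div_le hs (loss_nonneg hα0 hS₀nonneg hh.1 p)
        (loss_nonneg hα0 hS₀nonneg hg.1 p)).trans ?_
      rw [add_sub_add_left_eq_sub, h3, ← add_div]
      gcongr
      · exact abs_add_le _ _
      · exact abs_add_le _ _
    have iab : Integrable fun p => |gain α β S₀ (fun p => h p - g p) h p| +
        |gain α β S₀ g (fun p => h p - g p) p| := ia.abs.add ib.abs
    have iall : Integrable fun p => (|gain α β S₀ (fun p => h p - g p) h p| +
        |gain α β S₀ g (fun p => h p - g p) p|) +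
        (|v p| + |gain α β S₀ g g p|) * (C * ‖h - g‖) := iab.add ((ni g).mul_const _)
    refine (integral_mono_of_nonneg (Filter.Eventually.of_forall fun p => abs_nonneg _)
      (iall.div_const (√n)) bound).trans ?_
    have e : ∫ p, ((|gain α β S₀ (fun p => h p - g p) h p| +
          |gain α β S₀ g (fun p => h p - g p) p|) +
          (|v p| + |gain α β S₀ g g p|) * (C * ‖h - g‖)) =
        (∫ p, |gain α β S₀ (fun p => h p - g p) h p|) +
          (∫ p, |gain α β S₀ g (fun p => h p - g p) p|) +
          (∫ p, (|v p| + |gain α β S₀ g g p|)) * (C * ‖h - g‖) := by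
      rw [integral_add iab ((ni g).mul_const _), integral_add ia.abs ib.abs,
        integral_mul_const]
    have hd := norm_nonneg (h - g)
    have b1 : C * (‖h - g‖ * ‖h‖) ≤ C * (‖h - g‖ * r) := by have := hh.2; gcongr
    have b2 : C * (‖g‖ * ‖h - g‖) ≤ C * (r * ‖h - g‖) := by have := hg.2; gcongr
    have b3 : (∫ p, (|v p| + |gain α β S₀ g g p|)) * (C * ‖h - g‖) ≤
        r * (1 + C * r) * (C * ‖h - g‖) := by have := nb g hg; gcongr
    have b4 : 0 ≤ C * r * (C * r) * ‖h - g‖ := by positivity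
    rw [integral_div, e, div_mul_eq_mul_div]
    gcongr
    linarith
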